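/- Let A be an Abelian group with |A| > 2, let k ≥ 2, and let q_1,...,q_k be prime powers with each q_i ≥ 3. If R ≅ F_{q_1} × F_{q_2} × ... × F_{q_k} is the product of the corresponding finite fields, then the zero-divisor graph Γ(R) is A-vertex magic. -/

import Mathlib

open scoped Classical

/-- A graph `G` on a finite vertex type is `A`-vertex magic if there is a labeling of the
vertices by nonzero elements of `A` such that the sum of the labels over each open
neighborhood is a constant `μ`. -/
def vertexMagic {V : Type*} [Fintype V] (G : SimpleGraph V) (A : Type*) [AddCommGroup A] :
    Prop :=
  ∃ (l : V → A) (μ : A), (∀ v, l v ≠ 0) ∧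
    ∀ v : V, (∑ u : V, if G.Adj v u then l u else 0) = μ

/-- The zero-divisor graph `Γ(R)` of a commutative ring `R`: vertices are the
zero-divisors of `R` (nonzero elements annihilated by some nonzero element), with two
distinct vertices `u` and `v` adjacent iff `u * v = 0`. -/
def zeroDivisorGraph (R : Type*) [CommRing R] :
    SimpleGraph {x : R // x ≠ 0 ∧ ∃ y : R, y ≠ 0 ∧ x * y = 0} where
  Adj u v := u ≠ v ∧ (u : R) * v = 0
  symm := by
    refine ⟨?_⟩
    rintro u v ⟨h1, h2⟩
    exact ⟨h1.symm, by rwa [mul_comm]⟩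
  loopless := by
    refine ⟨?_⟩
    rintro u ⟨h1, -⟩
    exact h1 rfl

/-!
Suppose every vertex of a finite graph has a twin, that is, another vertex with the same
neighborhood. When `|A| > 2`, each twin class can be labeled by nonzero elements of `A` with sum
zero; every neighborhood is a union of twin classes, so all weights vanish. In a reduced ring,
multiplication by a unit `u` preserves neighborhoods in `Γ(R)`, and it moves every vertex when
`u - 1` is also a unit. A product of fields with at least three elements each has such a `u`.
-/

section NowhereZeroLabeling

variable {A V : Type*} [AddCommGroup A]

theorem exists_forall_ne_zero_sum_cons_eq {s : Finset V} {v : V} (hv : v ∉ s) {a b : A}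
    (ha : a ≠ 0) (h : ∃ l : V → A, (∀ w, l w ≠ 0) ∧ ∑ w ∈ s, l w = b) :
    ∃ l : V → A, (∀ w, l w ≠ 0) ∧ ∑ w ∈ s.cons v hv, l w = a + b := by
  obtain ⟨l, hl, rfl⟩ := h
  refine ⟨Function.update l v a, ?_, ?_⟩
  · rw [Function.forall_update_iff l fun _ b ↦ b ≠ 0]
    exact ⟨ha, fun w _ ↦ hl w⟩
  · rw [Finset.sum_cons, Function.update_self, Finset.sum_update_of_notMem hv]

theorem exists_forall_ne_zero_sum_eq (hA : 3 ≤ Cardinal.mk A) {s : Finset V} (hs : s.Nonempty)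
    {a : A} (ha : a ≠ 0) : ∃ l : V → A, (∀ v, l v ≠ 0) ∧ ∑ v ∈ s, l v = a := by
  induction hs using Finset.Nonempty.cons_induction generalizing a with
  | singleton v => exact ⟨fun _ ↦ a, fun _ ↦ ha, Finset.sum_singleton _ _⟩
  | cons v s hv _ ih =>
    obtain ⟨b, hb, hba⟩ := Cardinal.exists_ne_ne_of_three_le hA 0 a
    simpa only [add_sub_cancel] using
      exists_forall_ne_zero_sum_cons_eq hv hb (ih (sub_ne_zero.2 hba.symm))

theorem exists_forall_ne_zero_sum_eq_zero (hA : 3 ≤ Cardinal.mk A) {s : Finset V}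
    (hs : s.card ≠ 1) : ∃ l : V → A, (∀ v, l v ≠ 0) ∧ ∑ v ∈ s, l v = 0 := by
  obtain ⟨a, ha, -⟩ := Cardinal.exists_ne_ne_of_three_le hA 0 0
  induction s using Finset.cons_induction with
  | empty => exact ⟨fun _ ↦ a, fun _ ↦ ha, Finset.sum_empty⟩
  | cons v s hv _ =>
    have hne : s.Nonempty := by
      rw [Finset.nonempty_iff_ne_empty]
      rintro rfl
      exact hs (Finset.card_singleton v)
    simpa only [add_neg_cancel] using exists_forall_ne_zero_sum_cons_eq hv ha
      (exists_forall_ne_zero_sum_eq hA hne (neg_ne_zero.2 ha))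

theorem exists_forall_ne_zero_sum_fiber_eq_zero [Fintype V] {κ : Type*} [DecidableEq κ]
    (hA : 3 ≤ Cardinal.mk A) (f : V → κ) (hf : ∀ v, ∃ w ≠ v, f w = f v) :
    ∃ l : V → A, (∀ v, l v ≠ 0) ∧ ∀ i, ∑ v with f v = i, l v = 0 := by
  have card_fiber_ne_one (i : κ) : ({v | f v = i} : Finset V).card ≠ 1 := by
    intro h
    obtain ⟨v, hv⟩ := Finset.card_eq_one.1 h
    simp only [Finset.ext_iff, Finset.mem_filter_univ, Finset.mem_singleton] at hv
    obtain ⟨w, hwv, hw⟩ := hf v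
    exact hwv ((hv w).1 (hw.trans ((hv v).2 rfl)))
  choose l hl hsum using fun i ↦ exists_forall_ne_zero_sum_eq_zero hA (card_fiber_ne_one i)
  refine ⟨fun v ↦ l (f v) v, fun v ↦ hl _ v, fun i ↦ ?_⟩
  rw [← hsum i]
  refine Finset.sum_congr rfl fun v hv ↦ ?_
  simp only [(Finset.mem_filter_univ v).1 hv]

end NowhereZeroLabeling

theorem vertexMagic_of_forall_exists_neighborSet_eq {A V : Type*} [AddCommGroup A] [Fintype V]
    (hA : 3 ≤ Cardinal.mk A) {G : SimpleGraph V}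
    (hG : ∀ v, ∃ w ≠ v, G.neighborSet w = G.neighborSet v) : vertexMagic G A := by
  obtain ⟨l, hl, hsum⟩ := exists_forall_ne_zero_sum_fiber_eq_zero hA G.neighborSet hG
  refine ⟨l, 0, hl, fun v ↦ ?_⟩
  rw [← Finset.sum_fiberwise Finset.univ G.neighborSet]
  refine Finset.sum_eq_zero fun N _ ↦ ?_
  have adj_iff : ∀ u ∈ ({u | G.neighborSet u = N} : Finset V), G.Adj v u ↔ v ∈ N := by
    intro u hu
    rw [← (Finset.mem_filter_univ u).1 hu, SimpleGraph.mem_neighborSet, G.adj_comm]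
  calc ∑ u with G.neighborSet u = N, (if G.Adj v u then l u else 0)
      = ∑ u with G.neighborSet u = N, if v ∈ N then l u else 0 :=
        Finset.sum_congr rfl fun u hu ↦ by simp only [adj_iff u hu]
    _ = 0 := by rw [Finset.sum_ite_irrel, hsum, Finset.sum_const_zero, ite_self]

section ZeroDivisorGraph

variable {R : Type*} [CommRing R] [IsReduced R]

theorem zeroDivisorGraph_adj_iff_mul_eq_zero
    {x y : {x : R // x ≠ 0 ∧ ∃ y : R, y ≠ 0 ∧ x * y = 0}} :
    (zeroDivisorGraph R).Adj x y ↔ (x : R) * y = 0 := by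
  refine ⟨And.right, fun hxy ↦ ⟨?_, hxy⟩⟩
  rintro rfl
  exact x.2.1 (eq_zero_of_pow_eq_zero ((sq (x : R)).trans hxy))

theorem zeroDivisorGraph_exists_ne_neighborSet_eq {u : R} (hu : IsLeftRegular u)
    (hu' : IsLeftRegular (u - 1)) (x : {x : R // x ≠ 0 ∧ ∃ y : R, y ≠ 0 ∧ x * y = 0}) :
    ∃ y ≠ x, (zeroDivisorGraph R).neighborSet y = (zeroDivisorGraph R).neighborSet x := by
  obtain ⟨x, hx, z, hz, hxz⟩ := x
  have hux : u * x ≠ 0 := mt hu.mul_left_eq_zero_iff.1 hx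
  have huxz : u * x * z = 0 := by rw [mul_assoc, hxz, mul_zero]
  refine ⟨⟨u * x, hux, z, hz, huxz⟩, fun h ↦ ?_, ?_⟩
  · have hfix : u * x = x := congrArg Subtype.val h
    exact hx (hu'.mul_left_eq_zero_iff.1 (by rw [sub_one_mul, hfix, sub_self]))
  · ext w
    simp only [SimpleGraph.mem_neighborSet, zeroDivisorGraph_adj_iff_mul_eq_zero, mul_assoc,
      hu.mul_left_eq_zero_iff]

end ZeroDivisorGraph

theorem exists_isUnit_and_isUnit_sub_one_pi {ι : Type*} {K : ι → Type*}
    [∀ i, DivisionRing (K i)] (hK : ∀ i, 3 ≤ Cardinal.mk (K i)) :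
    ∃ x : ∀ i, K i, IsUnit x ∧ IsUnit (x - 1) := by
  choose x hx0 hx1 using fun i ↦ Cardinal.exists_ne_ne_of_three_le (hK i) 0 1
  exact ⟨x, Pi.isUnit_iff.2 fun i ↦ (hx0 i).isUnit,
    Pi.isUnit_iff.2 fun i ↦ (sub_ne_zero.2 (hx1 i)).isUnit⟩

theorem stmt_8 (A : Type*) [AddCommGroup A] (hA : 2 < Cardinal.mk A)
    (k : ℕ) (hk : 2 ≤ k) (q : Fin k → ℕ) (hq : ∀ i, IsPrimePow (q i))
    (hq3 : ∀ i, 3 ≤ q i)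
    (K : Fin k → Type*) [∀ i, Field (K i)] [∀ i, Fintype (K i)]
    (hcard : ∀ i, Fintype.card (K i) = q i)
    (R : Type*) [CommRing R] [Fintype R] (e : R ≃+* ∀ i, K i) :
    vertexMagic (zeroDivisorGraph R) A := by
  have hA' : 3 ≤ Cardinal.mk A := by
    rw [← two_add_one_eq_three]
    exact Cardinal.add_one_le_of_lt hA
  have hK (i : Fin k) : 3 ≤ Cardinal.mk (K i) := by
    rw [Cardinal.mk_fintype, hcard]
    exact_mod_cast hq3 i
  obtain ⟨x, hx, hx'⟩ := exists_isUnit_and_isUnit_sub_one_pi hK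
  have hu : IsUnit (e.symm x) := hx.map e.symm
  have hu' : IsUnit (e.symm x - 1) := by simpa using hx'.map e.symm
  have : IsReduced R := isReduced_of_injective e e.injective
  exact vertexMagic_of_forall_exists_neighborSet_eq hA'
    (zeroDivisorGraph_exists_ne_neighborSet_eq hu.isRegular.left hu'.isRegular.left)
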